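/- Let c be the unique real number satisfying e^{-c} = c. Then for all real numbers q > 1 and F with F ≤ cq, one has ω(q, F) := q·(1 - 1/q)^F - F·(1 - 1/q) > 0. In particular, for all integers q ≥ 2 and F ≥ 2 with F ≤ cq, the fixation condition ω(q, F) > 0 of Theorem 1 holds. -/

import Mathlib

/-!
The classical bounds `(1 - 1/q)^q ≤ e⁻¹ < (1 - 1/q)^(q - 1)` extend to
`e^(-x/q) (1 - 1/q) < (1 - 1/q)^x` for every `x ≤ q`, because
`(1 - 1/q)^x = (1 - 1/q)^(q - 1) · (1 - 1/q) · ((1 - 1/q)^q)^(x/q - 1)` and the last exponent is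
nonpositive. Hence `ω(q, F) > 0` as soon as `F/q ≤ e^(-F/q)`, which holds for `F/q ≤ c` because
`F/q ≤ c = e^(-c) ≤ e^(-F/q)`.
-/

section OneSubOneDivRpow

variable {q x : ℝ}

theorem one_sub_one_div_pos (hq : 1 < q) : 0 < 1 - 1 / q :=
  sub_pos.2 ((div_lt_one (one_pos.trans hq)).2 hq)

theorem one_sub_one_div_rpow_self_le_exp_neg_one (hq : 1 ≤ q) :
    (1 - 1 / q) ^ q ≤ Real.exp (-1) := by
  have hq₀ : 0 < q := one_pos.trans_le hq
  have hp : 0 ≤ 1 - 1 / q := sub_nonneg.2 ((div_le_one hq₀).2 hq)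
  calc (1 - 1 / q) ^ q
      ≤ Real.exp (-(1 / q)) ^ q :=
        Real.rpow_le_rpow hp (Real.one_sub_le_exp_neg _) hq₀.le
    _ = Real.exp (-1) := by
        rw [← Real.exp_mul, neg_mul, one_div_mul_cancel hq₀.ne']

theorem exp_neg_one_lt_one_sub_one_div_rpow_sub_one (hq : 1 < q) :
    Real.exp (-1) < (1 - 1 / q) ^ (q - 1) := by
  have hq₁ : 0 < q - 1 := sub_pos.2 hq
  have inv_eq : (1 - 1 / q)⁻¹ = 1 / (q - 1) + 1 := by
    field_simp [(one_pos.trans hq).ne']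
    ring
  have exp_lt : Real.exp (-(1 / (q - 1))) < 1 - 1 / q := by
    rw [Real.exp_neg, inv_lt_comm₀ (Real.exp_pos _) (one_sub_one_div_pos hq), inv_eq]
    exact Real.add_one_lt_exp (one_div_pos.2 hq₁).ne'
  calc Real.exp (-1)
      = Real.exp (-(1 / (q - 1))) ^ (q - 1) := by
        rw [← Real.exp_mul, neg_mul, one_div_mul_cancel hq₁.ne']
    _ < (1 - 1 / q) ^ (q - 1) := Real.rpow_lt_rpow (Real.exp_pos _).le exp_lt hq₁

theorem exp_neg_div_mul_one_sub_one_div_lt_rpow (hq : 1 < q) (hx : x ≤ q) :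
    Real.exp (-(x / q)) * (1 - 1 / q) < (1 - 1 / q) ^ x := by
  have hq₀ : 0 < q := one_pos.trans hq
  have hp : 0 < 1 - 1 / q := one_sub_one_div_pos hq
  have exp_le : Real.exp (-1) ^ (x / q - 1) ≤ ((1 - 1 / q) ^ q) ^ (x / q - 1) :=
    Real.rpow_le_rpow_of_nonpos (Real.rpow_pos_of_pos hp q)
      (one_sub_one_div_rpow_self_le_exp_neg_one hq.le) (sub_nonpos.2 ((div_le_one hq₀).2 hx))
  calc Real.exp (-(x / q)) * (1 - 1 / q)
      = Real.exp (-1) * (1 - 1 / q) * Real.exp (-1) ^ (x / q - 1) := by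
        rw [mul_right_comm, ← Real.exp_mul, ← Real.exp_add]
        ring_nf
    _ < (1 - 1 / q) ^ (q - 1) * (1 - 1 / q) * Real.exp (-1) ^ (x / q - 1) := by
        gcongr
        exact exp_neg_one_lt_one_sub_one_div_rpow_sub_one hq
    _ ≤ (1 - 1 / q) ^ (q - 1) * (1 - 1 / q) * ((1 - 1 / q) ^ q) ^ (x / q - 1) := by
        gcongr
    _ = (1 - 1 / q) ^ x := by
        rw [← Real.rpow_add_one hp.ne', sub_add_cancel, ← Real.rpow_mul hp.le,
          ← Real.rpow_add hp, mul_sub_one, mul_div_cancel₀ _ hq₀.ne', add_sub_cancel]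

end OneSubOneDivRpow

theorem le_one_of_le_exp_neg {a : ℝ} (ha : a ≤ Real.exp (-a)) : a ≤ 1 := by
  by_contra! one_lt
  have : Real.exp (-a) < 1 := Real.exp_lt_one_iff.2 (by linarith)
  linarith

theorem mul_one_sub_one_div_lt_mul_rpow_of_div_le_exp_neg {q F : ℝ} (hq : 1 < q)
    (hF : F / q ≤ Real.exp (-(F / q))) :
    F * (1 - 1 / q) < q * (1 - 1 / q) ^ F := by
  have hq₀ : 0 < q := one_pos.trans hq
  have hFq : F ≤ q := (div_le_one hq₀).1 (le_one_of_le_exp_neg hF)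
  calc F * (1 - 1 / q)
      = q * (F / q * (1 - 1 / q)) := by rw [← mul_assoc, mul_div_cancel₀ _ hq₀.ne']
    _ ≤ q * (Real.exp (-(F / q)) * (1 - 1 / q)) := by
        have := one_sub_one_div_pos hq
        gcongr
    _ < q * (1 - 1 / q) ^ F := by
        gcongr
        exact exp_neg_div_mul_one_sub_one_div_lt_rpow hq hFq

/-- Let `c` be the unique real number satisfying `e^{-c} = c`. Then for
all reals `q > 1` and `F ≤ c*q`, one has `ω(q, F) := q*(1 - 1/q)^F - F*(1 - 1/q) > 0`.
In particular, for all integers `q ≥ 2` and `F ≥ 2` with `F ≤ c*q`, the fixation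
condition `ω(q, F) > 0` of Theorem 1 holds. -/
theorem axelrod_omega_pos_of_le_cq (c : ℝ) (hc : Real.exp (-c) = c) :
    (∀ q F : ℝ, 1 < q → F ≤ c * q →
      0 < q * (1 - 1 / q) ^ F - F * (1 - 1 / q)) ∧
    (∀ q F : ℕ, 2 ≤ q → 2 ≤ F → (F : ℝ) ≤ c * q →
      0 < (q : ℝ) * (1 - 1 / q) ^ (F : ℝ) - F * (1 - 1 / q)) := by
  have omega_pos : ∀ q F : ℝ, 1 < q → F ≤ c * q →
      0 < q * (1 - 1 / q) ^ F - F * (1 - 1 / q) := by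
    intro q F hq hF
    have hFc : F / q ≤ c := (div_le_iff₀ (one_pos.trans hq)).2 hF
    refine sub_pos.2 (mul_one_sub_one_div_lt_mul_rpow_of_div_le_exp_neg hq ?_)
    calc F / q ≤ c := hFc
      _ = Real.exp (-c) := hc.symm
      _ ≤ Real.exp (-(F / q)) := Real.exp_le_exp.2 (neg_le_neg hFc)
  exact ⟨omega_pos, fun q F hq _ hF => omega_pos q F (Nat.one_lt_cast.2 hq) hF⟩
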